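/- Let X ⊂ P^n be a non-singular hypersurface of degree d ≥ 2. Then for every m ≥ 1, every point x ∈ X and every subvariety Z ⊆ F_m(X), the cone C_x(Z) of m-planes of Z through x satisfies dim C_x(Z) ≤ n − 2. (This rests on the fact that a hypersurface of degree at least 2 which is a cone is singular at its vertex.) -/

import Mathlib

noncomputable section

abbrev KK : Type := AlgebraicClosure ℚ

abbrev Pn (N : ℕ) := Projectivization KK (Fin (N + 1) → KK)

/-- The common zero set in projective space of a family of polynomials
(membership tested on the chosen representative). -/
def projZeros {N : ℕ} (S : Set (MvPolynomial (Fin (N + 1)) KK)) : Set (Pn N) :=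
  {x | ∀ f ∈ S, MvPolynomial.eval x.rep f = 0}

/-- Zariski-closed subsets of projective space: common zero sets of families of forms. -/
def ProjClosed {N : ℕ} (V : Set (Pn N)) : Prop :=
  ∃ S : Set (MvPolynomial (Fin (N + 1)) KK),
    (∀ f ∈ S, ∃ d, f.IsHomogeneous d) ∧ V = projZeros S

def ProjIrred {N : ℕ} (V : Set (Pn N)) : Prop :=
  V.Nonempty ∧ ∀ C₁ C₂ : Set (Pn N), ProjClosed C₁ → ProjClosed C₂ →
    V ⊆ C₁ ∪ C₂ → V ⊆ C₁ ∨ V ⊆ C₂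

/-- A (geometrically integral) projective variety: an irreducible Zariski-closed set. -/
def ProjVariety {N : ℕ} (V : Set (Pn N)) : Prop := ProjClosed V ∧ ProjIrred V

/-- Dimension of a subset of projective space: Krull dimension of the poset of
irreducible closed subsets contained in it. The empty set has dimension `⊥`. -/
def projDim {N : ℕ} (V : Set (Pn N)) : WithBot ENat :=
  Order.krullDim {W : Set (Pn N) // ProjVariety W ∧ W ⊆ V}

/-- The set of projective points lying on a linear subspace. -/
def planeSet {N : ℕ} (W : Submodule KK (Fin (N + 1) → KK)) : Set (Pn N) :=
  {x | x.rep ∈ W}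

/-- Degree of a subset of projective space: the largest (finite) number of points
in a linear section. -/
def projDeg {N : ℕ} (V : Set (Pn N)) : ℕ :=
  sSup {k : ℕ | ∃ W : Submodule KK (Fin (N + 1) → KK),
    (V ∩ planeSet W).Finite ∧ (V ∩ planeSet W).ncard = k}

/-- The hypersurface cut out by a form. -/
def hyp {n : ℕ} (F : MvPolynomial (Fin (n + 1)) KK) : Set (Pn n) :=
  {x | MvPolynomial.eval x.rep F = 0}

/-- A form over the algebraic closure is non-singular if its partial derivatives
have no common non-trivial zero. -/
def NonsingularK {n : ℕ} (F : MvPolynomial (Fin (n + 1)) KK) : Prop :=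
  ∀ z : Fin (n + 1) → KK,
    (∀ i, MvPolynomial.eval z (MvPolynomial.pderiv i F) = 0) → z = 0

/-- The Fano set of (projective) m-planes contained in X, as linear subspaces of
dimension m+1. -/
def Fano (m n : ℕ) (X : Set (Pn n)) : Set (Submodule KK (Fin (n + 1) → KK)) :=
  {W | Module.finrank KK W = m + 1 ∧ planeSet W ⊆ X}

/-- Closed subsets of the Grassmannian of m-planes in Pⁿ, described via Stiefel
coordinates: Z is closed iff the set of (m+1)-tuples of vectors which, when
linearly independent, span a member of Z, is Zariski-closed in affine space. -/
def GrClosed (m n : ℕ) (Z : Set (Submodule KK (Fin (n + 1) → KK))) : Prop :=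
  (∀ W ∈ Z, Module.finrank KK W = m + 1) ∧
  ∃ S : Set (MvPolynomial (Fin (m + 1) × Fin (n + 1)) KK),
    {v : Fin (m + 1) → Fin (n + 1) → KK |
      LinearIndependent KK v → Submodule.span KK (Set.range v) ∈ Z}
    = {v | ∀ f ∈ S, MvPolynomial.eval (fun p => v p.1 p.2) f = 0}

def GrIrred (m n : ℕ) (Z : Set (Submodule KK (Fin (n + 1) → KK))) : Prop :=
  Z.Nonempty ∧ ∀ C₁ C₂ : Set (Submodule KK (Fin (n + 1) → KK)),
    GrClosed m n C₁ → GrClosed m n C₂ → Z ⊆ C₁ ∪ C₂ → Z ⊆ C₁ ∨ Z ⊆ C₂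

/-- A (geometrically integral) subvariety of the Grassmannian. -/
def GrVariety (m n : ℕ) (Z : Set (Submodule KK (Fin (n + 1) → KK))) : Prop :=
  GrClosed m n Z ∧ GrIrred m n Z

/-- Dimension of a subset of the Grassmannian of m-planes in Pⁿ. -/
def grDim (m n : ℕ) (Z : Set (Submodule KK (Fin (n + 1) → KK))) : WithBot ENat :=
  Order.krullDim {W : Set (Submodule KK (Fin (n + 1) → KK)) // GrVariety m n W ∧ W ⊆ Z}

/-- D(Z): the union of the planes parametrised by Z. -/
def DSet {n : ℕ} (Z : Set (Submodule KK (Fin (n + 1) → KK))) : Set (Pn n) :=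
  {x | ∃ Λ ∈ Z, x.rep ∈ Λ}

/-- A primitive integer vector: the gcd of its coordinates is 1. -/
def IsPrimitiveVec {n : ℕ} (x : Fin n → ℤ) : Prop := Finset.univ.gcd x = 1

/-- Height of an integer vector: the maximum modulus of its coordinates. -/
def heightVec {n : ℕ} (x : Fin n → ℤ) : ℝ :=
  ((Finset.univ.sup fun i => (x i).natAbs : ℕ) : ℝ)

def coeK {n : ℕ} (x : Fin n → ℤ) : Fin n → KK := fun i => ((x i : ℤ) : KK)

def coeQ {n : ℕ} (x : Fin n → ℤ) : Fin n → ℚ := fun i => ((x i : ℤ) : ℚ)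

/-- The number of rational points of height at most B on a subset V of projective
space, counted via primitive integer vectors (each projective rational point
corresponds to exactly two primitive vectors). -/
def NV {n : ℕ} (V : Set (Pn n)) (B : ℝ) : ℕ :=
  Set.ncard {x : Fin (n + 1) → ℤ | IsPrimitiveVec x ∧ heightVec x ≤ B ∧
    ∃ h : coeK x ≠ 0, Projectivization.mk KK (coeK x) h ∈ V}

/-- An integer form is non-singular if its partial derivatives have no common
non-trivial zero over the algebraic closure of ℚ. -/
def NonsingularZ {n : ℕ} (F : MvPolynomial (Fin (n + 1)) ℤ) : Prop :=
  ∀ z : Fin (n + 1) → KK,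
    (∀ i, MvPolynomial.aeval z (MvPolynomial.pderiv i F) = 0) → z = 0

/-- Base change of an integer polynomial to the algebraic closure of ℚ. -/
def mapK {n : ℕ} (F : MvPolynomial (Fin (n + 1)) ℤ) : MvPolynomial (Fin (n + 1)) KK :=
  MvPolynomial.map (Int.castRingHom KK) F

/-- The Plücker height of the rational m-plane spanned by the integer vectors v:
the maximum modulus of the (m+1)×(m+1) minors, divided by their gcd. -/
def pluckerHeight {m n : ℕ} (v : Fin (m + 1) → Fin (n + 1) → ℤ) : ℕ :=
  (Finset.univ.sup fun s : Fin (m + 1) → Fin (n + 1) =>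
    (Matrix.det (Matrix.of fun i j => v i (s j))).natAbs) /
  (Finset.univ.gcd fun s : Fin (m + 1) → Fin (n + 1) =>
    (Matrix.det (Matrix.of fun i j => v i (s j))).natAbs)

def betaExp (k : ℕ) : ℝ := if k ≤ 3 then 0 else 1/4

def sigmaExp (n k : ℕ) : ℝ :=
  if (k : ℝ) ≤ ((n : ℝ) - 1) / 2 then (k : ℝ) + 1 else (k : ℝ) + betaExp k

def tauExp (n k : ℕ) : ℝ :=
  if (k : ℝ) < ((n : ℝ) - 1) / 2 then (k : ℝ) + 1 else (k : ℝ) + betaExp k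

/-- E: the union of the (n-1)/2-planes contained in X (for n odd; empty for n even). -/
def bigE {n : ℕ} (X : Set (Pn n)) : Set (Pn n) :=
  {x | n % 2 = 1 ∧ ∃ W : Submodule KK (Fin (n + 1) → KK),
    Module.finrank KK W = (n - 1) / 2 + 1 ∧ planeSet W ⊆ X ∧ x ∈ planeSet W}

/-- The cone of lines contained in X passing through x. -/
def coneOfLines {n : ℕ} (X : Set (Pn n)) (x : Pn n) : Set (Pn n) :=
  {y | ∃ L : Submodule KK (Fin (n + 1) → KK),
    Module.finrank KK L = 2 ∧ planeSet L ⊆ X ∧ x.rep ∈ L ∧ y.rep ∈ L}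

/-!
A plane in `X` through `x` also lies in the tangent hyperplane of `X` at `x`, so the cone is
contained in the section of `X : F = 0` by the tangent form `L ≠ 0`. If `L` divided `F`, say
`F = L * G`, then `X` would be singular along `L = G = 0`, which has a point on every line inside
the hyperplane `L = 0`. Hence `L` is a prime not dividing `F`, and `K[X₀, …, Xₙ] / (F, L)` has Krull
dimension at most `n - 1`. The homogeneous primes of subvarieties are all strictly below the ideal
of the origin of affine space, which accounts for the remaining `1`.
-/

section Polynomials

open MvPolynomial

variable {σ R K : Type*}

/-- The restriction of a polynomial to the parametrised affine line `t ↦ a + t • b`, as a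
univariate polynomial in `t`. -/
def restrictLine [CommSemiring R] (a b : σ → R) : MvPolynomial σ R →ₐ[R] Polynomial R :=
  aeval fun i => Polynomial.C (a i) + Polynomial.C (b i) * Polynomial.X

lemma eval_restrictLine [CommSemiring R] (a b : σ → R) (f : MvPolynomial σ R) (t : R) :
    (restrictLine a b f).eval t = eval (a + t • b) f := by
  have h : (Polynomial.aeval t).comp (restrictLine a b) = aeval (a + t • b) :=
    algHom_ext fun i => by simp [restrictLine, mul_comm t]
  simpa [Polynomial.coe_aeval_eq_eval, aeval_eq_eval] using DFunLike.congr_fun h f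

lemma restrictLine_eq_zero_iff [CommRing R] [IsDomain R] [Infinite R] {a b : σ → R}
    {f : MvPolynomial σ R} : restrictLine a b f = 0 ↔ ∀ t : R, eval (a + t • b) f = 0 := by
  simp only [← eval_restrictLine]
  exact ⟨fun h t => by rw [h, Polynomial.eval_zero],
    fun h => Polynomial.funext fun t => by rw [h, Polynomial.eval_zero]⟩

lemma derivative_restrictLine [CommSemiring R] [Fintype σ] (a b : σ → R)
    (f : MvPolynomial σ R) :
    Polynomial.derivative (restrictLine a b f) =
      ∑ i, restrictLine a b (pderiv i f) * Polynomial.C (b i) := by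
  classical
  have hX (j : σ) : restrictLine a b (X j) =
      Polynomial.C (a j) + Polynomial.C (b j) * Polynomial.X := aeval_X _ j
  induction f using MvPolynomial.induction_on with
  | C r => simp [restrictLine]
  | add p q hp hq => simp [hp, hq, add_mul, Finset.sum_add_distrib]
  | mul_X p j hp =>
    have hj : ∑ i, restrictLine a b (pderiv i (X j)) * Polynomial.C (b i) =
        Polynomial.C (b j) := by
      simp [pderiv_X, Pi.single_apply, apply_ite (restrictLine a b)]
    calc Polynomial.derivative (restrictLine a b (p * X j))
        = Polynomial.derivative (restrictLine a b p) * restrictLine a b (X j) +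
            restrictLine a b p * Polynomial.C (b j) := by
          rw [map_mul, Polynomial.derivative_mul, hX]; simp
      _ = ∑ i, restrictLine a b (pderiv i (p * X j)) * Polynomial.C (b i) := by
          rw [hp, ← hj, Finset.sum_mul, Finset.mul_sum, ← Finset.sum_add_distrib]
          refine Finset.sum_congr rfl fun i _ => ?_
          rw [pderiv_mul, map_add, map_mul, map_mul]
          ring

lemma sum_eval_pderiv_mul_eq_zero [CommRing R] [IsDomain R] [Infinite R] [Fintype σ]
    {f : MvPolynomial σ R} {a b : σ → R} (h : ∀ t : R, eval (a + t • b) f = 0) :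
    ∑ i, eval a (pderiv i f) * b i = 0 := by
  have hD := congrArg (Polynomial.eval 0) (derivative_restrictLine a b f)
  simpa [restrictLine_eq_zero_iff.mpr h, Polynomial.eval_finsetSum, eval_restrictLine]
    using hD.symm

lemma eval_smul_of_isHomogeneous [CommSemiring R] {f : MvPolynomial σ R} {d : ℕ}
    (hf : f.IsHomogeneous d) (t : R) (v : σ → R) : eval (t • v) f = t ^ d * eval v f := by
  rw [eval_eq, eval_eq, Finset.mul_sum]
  refine Finset.sum_congr rfl fun e he => ?_
  simp only [Pi.smul_apply, smul_eq_mul, mul_pow, Finset.prod_mul_distrib]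
  rw [Finset.prod_pow_eq_pow_sum, hf.degree_eq_sum_deg_support he]
  ring

lemma eval_zero_of_isHomogeneous [CommSemiring R] {f : MvPolynomial σ R} {d : ℕ}
    (hf : f.IsHomogeneous d) (hd : d ≠ 0) : eval 0 f = 0 := by
  simpa [hd] using eval_smul_of_isHomogeneous hf 0 0

lemma forall_eval_smul_eq_zero_iff [CommRing R] [IsDomain R] [Infinite R] {v : σ → R}
    {f : MvPolynomial σ R} :
    (∀ t : R, eval (t • v) f = 0) ↔ ∀ k, eval v (homogeneousComponent k f) = 0 := by
  have hsum (t : R) : eval (t • v) f =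
      ∑ k ∈ Finset.range (f.totalDegree + 1), t ^ k * eval v (homogeneousComponent k f) := by
    conv_lhs => rw [← sum_homogeneousComponent f, map_sum]
    exact Finset.sum_congr rfl fun k _ =>
      eval_smul_of_isHomogeneous (homogeneousComponent_isHomogeneous k f) t v
  refine ⟨fun h k => ?_, fun h t => by simp [hsum, h]⟩
  rcases lt_or_ge f.totalDegree k with hk | hk
  · rw [homogeneousComponent_eq_zero _ _ hk, map_zero]
  · let P : Polynomial R := ∑ k ∈ Finset.range (f.totalDegree + 1),
      Polynomial.monomial k (eval v (homogeneousComponent k f))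
    have hP : P = 0 := Polynomial.funext fun t => by
      simp [P, Polynomial.eval_finsetSum, mul_comm _ (t ^ _), ← hsum, h]
    simpa [P, Polynomial.finsetSum_coeff, Polynomial.coeff_monomial, Nat.lt_succ_iff.mpr hk]
      using congrArg (Polynomial.coeff · k) hP

lemma exists_mem_ne_zero_eval_eq_zero [Field K] [IsAlgClosed K] {H : MvPolynomial σ K} {e : ℕ}
    (hH : H.IsHomogeneous e) (he : e ≠ 0) {Λ : Submodule K (σ → K)}
    (hΛ : 1 < Module.finrank K Λ) : ∃ z ∈ Λ, z ≠ 0 ∧ eval z H = 0 := by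
  have : Nontrivial Λ := Module.nontrivial_of_finrank_pos (zero_lt_one.trans hΛ)
  obtain ⟨v, hv⟩ := exists_ne (0 : Λ)
  obtain ⟨u, hvu⟩ := exists_linearIndependent_pair_of_one_lt_finrank hΛ hv
  have hline (t : K) : (u + t • v : σ → K) ≠ 0 := fun h0 =>
    one_ne_zero (LinearIndependent.pair_iff.mp hvu t 1 (by
      rw [one_smul, add_comm]; exact Subtype.ext h0)).2
  by_cases hdeg : (restrictLine (u : σ → K) v H).degree = 0
  · -- Homogeneity turns constancy on the line `u + t • v` into `H (v + t • u) = c * t ^ e`,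
    -- first for `t ≠ 0` and then, as a polynomial identity, also for `t = 0`.
    obtain ⟨c, hc⟩ : ∃ c, restrictLine (u : σ → K) v H = Polynomial.C c :=
      ⟨_, Polynomial.eq_C_of_degree_eq_zero hdeg⟩
    have hswap : restrictLine (v : σ → K) u H = Polynomial.C c * Polynomial.X ^ e := by
      refine Polynomial.eq_of_infinite_eval_eq _ _
        ((Set.finite_singleton (0 : K)).infinite_compl.mono fun t ht => ?_)
      have hvt : (v + t • u : σ → K) = t • (u + t⁻¹ • v : σ → K) := by
        rw [smul_add, smul_inv_smul₀ ht, add_comm]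
      rw [Set.mem_ofPred_eq, eval_restrictLine, hvt, eval_smul_of_isHomogeneous hH,
        ← eval_restrictLine, hc]
      simp only [Polynomial.eval_mul, Polynomial.eval_C, Polynomial.eval_pow, Polynomial.eval_X]
      exact mul_comm _ _
    refine ⟨v, v.2, Subtype.coe_ne_coe.mpr hv, ?_⟩
    simpa [eval_restrictLine, he] using congrArg (Polynomial.eval 0) hswap
  · obtain ⟨t, ht⟩ := IsAlgClosed.exists_root _ hdeg
    exact ⟨u + t • v, Λ.add_mem u.2 (Λ.smul_mem t v.2), hline t, by rwa [← eval_restrictLine]⟩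

lemma eval_sumSMulX [CommRing R] [Fintype σ] (c : σ →₀ R) (z : σ → R) :
    eval z (sumSMulX c) = ∑ i, c i * z i := by
  simp [sumSMulX, Finsupp.linearCombination_apply, Finsupp.sum_fintype, smul_eval]

lemma pderiv_sumSMulX [CommRing R] (c : σ →₀ R) (i : σ) :
    pderiv i (sumSMulX c) = C (c i) := by
  classical
  simp +contextual [sumSMulX, Finsupp.linearCombination_apply, Finsupp.sum, pderiv_X,
    Pi.single_apply, smul_eq_C_mul]

lemma isHomogeneous_sumSMulX [CommRing R] (c : σ →₀ R) :
    (sumSMulX c).IsHomogeneous 1 :=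
  IsHomogeneous.sum _ _ _ fun i _ => by
    simpa [smul_eq_C_mul] using isHomogeneous_C_mul_X (c i) i

lemma prime_sumSMulX [Field K] {c : σ →₀ K} (hc : c ≠ 0) : Prime (sumSMulX c) := by
  obtain ⟨i, hi⟩ := Finsupp.ne_iff.mp hc
  refine (irreducible_sumSMulX c (Finsupp.support_nonempty_iff.mpr hc) fun r hr => ?_).prime
  exact isUnit_iff_ne_zero.mpr fun h0 => hi (zero_dvd_iff.mp (h0 ▸ hr i))

/-- If `F = L * G` with `L` linear, then `∇F = G • ∇L` along the hyperplane `L = 0`, so `F` is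
singular wherever `G` vanishes on that hyperplane. -/
lemma exists_ne_zero_forall_eval_pderiv_eq_zero [Field K] [IsAlgClosed K]
    {F : MvPolynomial σ K} {d : ℕ} (hF : F.IsHomogeneous d) (hd : 2 ≤ d) {c : σ →₀ K} (hc : c ≠ 0)
    (hcF : sumSMulX c ∣ F) {Λ : Submodule K (σ → K)} (hΛ : 1 < Module.finrank K Λ)
    (hcΛ : ∀ z ∈ Λ, eval z (sumSMulX c) = 0) :
    ∃ z ≠ 0, ∀ i, eval z (pderiv i F) = 0 := by
  obtain ⟨G, rfl⟩ := hcF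
  obtain ⟨j, hj⟩ := Finsupp.ne_iff.mp hc
  obtain ⟨z, hzΛ, hz, hzj⟩ :=
    exists_mem_ne_zero_eval_eq_zero (hF.pderiv (i := j)) (by omega) hΛ
  have hgrad (i : σ) : eval z (pderiv i (sumSMulX c * G)) = c i * eval z G := by
    simp [pderiv_sumSMulX, hcΛ z hzΛ, mul_comm]
  have hG : eval z G = 0 := (mul_eq_zero.mp (hgrad j ▸ hzj)).resolve_left hj
  exact ⟨z, hz, fun i => by rw [hgrad, hG, mul_zero]⟩

/-- The form cutting out the tangent space at `a` of the hypersurface `F = 0`. -/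
def tangentForm [CommRing R] [Finite σ] (F : MvPolynomial σ R) (a : σ → R) : MvPolynomial σ R :=
  sumSMulX (Finsupp.equivFunOnFinite.symm fun i => eval a (pderiv i F))

lemma eval_tangentForm [CommRing R] [Fintype σ] (F : MvPolynomial σ R) (a z : σ → R) :
    eval z (tangentForm F a) = ∑ i, eval a (pderiv i F) * z i := by
  simp [tangentForm, eval_sumSMulX]

end Polynomials

lemma ringKrullDim_quotient_span_pair_add_two_le {R : Type*} [CommRing R] [IsDomain R] {f g : R}
    (hg : Prime g) (hgf : ¬ g ∣ f) :
    ringKrullDim (R ⧸ Ideal.span {f, g}) + 2 ≤ ringKrullDim R := by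
  have hle : Ideal.span {g} ≤ Ideal.span {f, g} := Ideal.span_mono (by simp)
  have : (Ideal.span {g}).IsPrime := (Ideal.span_singleton_prime hg.ne_zero).mpr hg
  have hf : Ideal.Quotient.mk (Ideal.span {g}) f ≠ 0 := by
    rwa [Ne, Ideal.Quotient.eq_zero_iff_mem, Ideal.mem_span_singleton]
  have hf' : Ideal.Quotient.factor hle (Ideal.Quotient.mk _ f) = 0 := by
    rw [Ideal.Quotient.factor_mk, Ideal.Quotient.eq_zero_iff_mem]
    exact Ideal.subset_span (by simp)
  calc ringKrullDim (R ⧸ Ideal.span {f, g}) + 2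
      = ringKrullDim (R ⧸ Ideal.span {f, g}) + 1 + 1 := by rw [add_assoc, one_add_one_eq_two]
    _ ≤ ringKrullDim (R ⧸ Ideal.span {g}) + 1 := by
        gcongr
        exact ringKrullDim_succ_le_of_surjective _ (Ideal.Quotient.factor_surjective hle)
          (mem_nonZeroDivisors_of_ne_zero hf) hf'
    _ ≤ ringKrullDim R := ringKrullDim_quotient_succ_le_of_nonZeroDivisor
        (mem_nonZeroDivisors_of_ne_zero hg.ne_zero)

section Projective

open MvPolynomial

variable {N : ℕ} {V W : Set (Pn N)} {S : Set (MvPolynomial (Fin (N + 1)) KK)}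

/-- The affine cone over a set of projective points, i.e. the union of the corresponding lines
through the origin. The cone over the empty set is empty. -/
def affineCone (V : Set (Pn N)) : Set (Fin (N + 1) → KK) :=
  ⋃ x ∈ V, (x.submodule : Set (Fin (N + 1) → KK))

/-- The homogeneous ideal of a set of projective points, encoded as the ideal of polynomials
vanishing on its affine cone. -/
def projIdeal (V : Set (Pn N)) : Ideal (MvPolynomial (Fin (N + 1)) KK) :=
  vanishingIdeal KK (affineCone V)

lemma mem_projIdeal_iff {f : MvPolynomial (Fin (N + 1)) KK} :
    f ∈ projIdeal V ↔ ∀ x ∈ V, ∀ t : KK, eval (t • x.rep) f = 0 := by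
  simp only [projIdeal, affineCone, mem_vanishingIdeal_iff, Set.mem_iUnion₂, SetLike.mem_coe,
    Projectivization.submodule_eq, Submodule.mem_span_singleton, aeval_eq_eval, exists_prop]
  exact ⟨fun h x hx t => h _ ⟨x, hx, t, rfl⟩, by rintro h _ ⟨x, hx, t, rfl⟩; exact h x hx t⟩

lemma projIdeal_antitone (h : V ⊆ W) : projIdeal W ≤ projIdeal V :=
  vanishingIdeal_anti_mono (Set.biUnion_subset_biUnion_left h)

lemma projClosed_setOf_forall_eval_smul_eq_zero (f : MvPolynomial (Fin (N + 1)) KK) :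
    ProjClosed {x : Pn N | ∀ t : KK, eval (t • x.rep) f = 0} := by
  refine ⟨Set.range fun k => homogeneousComponent k f, ?_, ?_⟩
  · rintro _ ⟨k, rfl⟩
    exact ⟨k, homogeneousComponent_isHomogeneous k f⟩
  · ext x
    simp [projZeros, forall_eval_smul_eq_zero_iff]

lemma ProjIrred.isPrime_projIdeal (hV : ProjIrred V) : (projIdeal V).IsPrime := by
  obtain ⟨⟨x, hx⟩, hirr⟩ := hV
  refine Ideal.isPrime_iff.mpr ⟨fun htop => ?_, fun {f g} hfg => ?_⟩
  · simpa using mem_projIdeal_iff.mp ((Ideal.eq_top_iff_one _).mp htop) x hx 0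
  · simp only [mem_projIdeal_iff] at hfg ⊢
    refine hirr _ _ (projClosed_setOf_forall_eval_smul_eq_zero f)
      (projClosed_setOf_forall_eval_smul_eq_zero g) fun y hy => ?_
    have hline {h : MvPolynomial (Fin (N + 1)) KK} :
        (∀ t : KK, eval (t • y.rep) h = 0) ↔ restrictLine 0 y.rep h = 0 := by
      simp [restrictLine_eq_zero_iff]
    have hmul := hline.mp (hfg y hy)
    rw [map_mul, mul_eq_zero] at hmul
    exact hmul.imp hline.mpr hline.mpr

lemma span_le_projIdeal (hS : ∀ f ∈ S, ∃ d, f.IsHomogeneous d) (hV : V ⊆ projZeros S) :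
    Ideal.span S ≤ projIdeal V := by
  refine Ideal.span_le.mpr fun f hf => mem_projIdeal_iff.mpr fun x hx t => ?_
  obtain ⟨d, hd⟩ := hS f hf
  rw [eval_smul_of_isHomogeneous hd, hV hx f hf, mul_zero]

lemma ProjClosed.subset_of_projIdeal_le (hV : ProjClosed V) (h : projIdeal V ≤ projIdeal W) :
    W ⊆ V := by
  obtain ⟨S, hS, rfl⟩ := hV
  intro x hx f hf
  have hfW : f ∈ projIdeal W := h (span_le_projIdeal hS subset_rfl (Ideal.subset_span hf))
  simpa using mem_projIdeal_iff.mp hfW x hx 1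

lemma ProjClosed.projIdeal_lt (hV : ProjClosed V) (h : V < W) : projIdeal W < projIdeal V :=
  (projIdeal_antitone h.le).lt_of_not_ge fun hle => h.not_ge (hV.subset_of_projIdeal_le hle)

lemma projIdeal_lt_vanishingIdeal_zero (hV : V.Nonempty) :
    projIdeal V < vanishingIdeal KK {(0 : Fin (N + 1) → KK)} := by
  obtain ⟨x, hx⟩ := hV
  refine SetLike.lt_iff_le_and_exists.mpr ⟨fun f hf => ?_, ?_⟩
  · simpa [aeval_eq_eval] using mem_projIdeal_iff.mp hf x hx 0
  · obtain ⟨i, hi⟩ := Function.ne_iff.mp x.rep_nonzero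
    refine ⟨X i, by simp, fun hX => hi ?_⟩
    simpa using mem_projIdeal_iff.mp hX x hx 1

lemma projDim_empty : projDim (∅ : Set (Pn N)) = ⊥ :=
  Order.krullDim_eq_bot_iff.mpr ⟨fun W => (W.2.1.2.1.mono W.2.2).ne_empty rfl⟩

lemma projDim_mono (h : V ⊆ W) : projDim V ≤ projDim W :=
  Order.krullDim_le_of_strictMono (fun U => ⟨U.1, U.2.1, U.2.2.trans h⟩) fun _ _ hlt => hlt

/-- The prime ideals of the varieties in a strict chain lie strictly below the ideal of the
origin, whence the extra `1`. -/
lemma projDim_projZeros_add_one_le (hS : ∀ f ∈ S, ∃ d, f.IsHomogeneous d) :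
    projDim (projZeros S) + 1 ≤ ringKrullDim (MvPolynomial (Fin (N + 1)) KK ⧸ Ideal.span S) := by
  let 𝒱 := {W : Set (Pn N) // ProjVariety W ∧ W ⊆ projZeros S}
  rcases isEmpty_or_nonempty 𝒱 with h𝒱 | h𝒱
  · rw [projDim, Order.krullDim_eq_bot, WithBot.bot_add]
    exact bot_le
  · have hlt (W : 𝒱) : projIdeal W.1 < vanishingIdeal KK {(0 : Fin (N + 1) → KK)} :=
      projIdeal_lt_vanishingIdeal_zero W.2.1.2.1
    have hle (W : 𝒱) : Ideal.span S ≤ projIdeal W.1 := span_le_projIdeal hS W.2.2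
    let ψ : WithBot 𝒱 → (PrimeSpectrum.zeroLocus (R := MvPolynomial (Fin (N + 1)) KK)
        (Ideal.span S))ᵒᵈ :=
      WithBot.recBotCoe
        (OrderDual.toDual ⟨⟨vanishingIdeal KK {0}, inferInstance⟩, (hle h𝒱.some).trans (hlt _).le⟩)
        fun W => OrderDual.toDual ⟨⟨projIdeal W.1, W.2.1.2.isPrime_projIdeal⟩, hle W⟩
    have hψ : StrictMono ψ :=
      WithBot.strictMono_iff.mpr ⟨fun V _ hVW => V.2.1.1.projIdeal_lt hVW, hlt⟩
    rw [ringKrullDim_quotient, ← Order.krullDim_orderDual, projDim, ← Order.krullDim_withBot]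
    exact Order.krullDim_le_of_strictMono ψ hψ

lemma projDim_projZeros_pair_add_two_le {F G : MvPolynomial (Fin (N + 1)) KK} {d e : ℕ}
    (hF : F.IsHomogeneous d) (hG : G.IsHomogeneous e) (hGp : Prime G) (hGF : ¬ G ∣ F) :
    projDim (projZeros {F, G}) + 2 ≤ N := by
  have hS : ∀ f ∈ ({F, G} : Set _), ∃ d, f.IsHomogeneous d := by
    rintro _ (rfl | rfl)
    exacts [⟨d, hF⟩, ⟨e, hG⟩]
  rw [← ENat.WithBot.add_le_add_one_right_iff]
  calc projDim (projZeros {F, G}) + 2 + 1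
      = projDim (projZeros {F, G}) + 1 + 2 := add_right_comm _ _ _
    _ ≤ ringKrullDim (MvPolynomial (Fin (N + 1)) KK ⧸ Ideal.span {F, G}) + 2 := by
        gcongr
        exact projDim_projZeros_add_one_le hS
    _ ≤ ringKrullDim (MvPolynomial (Fin (N + 1)) KK) :=
        ringKrullDim_quotient_span_pair_add_two_le hGp hGF
    _ = N + 1 := by simp [MvPolynomial.ringKrullDim_of_isNoetherianRing]

end Projective

section Hypersurface

open MvPolynomial

variable {n d : ℕ} {F : MvPolynomial (Fin (n + 1)) KK}

lemma eval_eq_zero_of_mem_of_planeSet_subset_hyp (hF : F.IsHomogeneous d) (hd : d ≠ 0)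
    {Λ : Submodule KK (Fin (n + 1) → KK)} (hΛ : planeSet Λ ⊆ hyp F) {z : Fin (n + 1) → KK}
    (hz : z ∈ Λ) : eval z F = 0 := by
  rcases eq_or_ne z 0 with rfl | h0
  · exact eval_zero_of_isHomogeneous hF hd
  · obtain ⟨u, hu⟩ := Projectivization.exists_smul_eq_mk_rep KK z h0
    have hmem : Projectivization.mk KK z h0 ∈ planeSet Λ := by
      rw [planeSet, Set.mem_ofPred_eq, ← hu]
      exact Λ.smul_mem _ hz
    have heval : (u : KK) ^ d * eval z F = 0 := by
      rw [← eval_smul_of_isHomogeneous hF]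
      exact hu ▸ hΛ hmem
    exact (mul_eq_zero.mp heval).resolve_left (pow_ne_zero d u.ne_zero)

lemma eval_tangentForm_eq_zero_of_mem (hF : F.IsHomogeneous d) (hd : d ≠ 0)
    {Λ : Submodule KK (Fin (n + 1) → KK)} (hΛ : planeSet Λ ⊆ hyp F) {a z : Fin (n + 1) → KK}
    (ha : a ∈ Λ) (hz : z ∈ Λ) : eval z (tangentForm F a) = 0 := by
  rw [eval_tangentForm]
  exact sum_eval_pderiv_mul_eq_zero fun t =>
    eval_eq_zero_of_mem_of_planeSet_subset_hyp hF hd hΛ (Λ.add_mem ha (Λ.smul_mem t hz))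

lemma projDim_tangent_section_add_two_le (hF : F.IsHomogeneous d) (hd : 2 ≤ d)
    (hns : NonsingularK F) {Λ : Submodule KK (Fin (n + 1) → KK)} (hΛ : 2 ≤ Module.finrank KK Λ)
    (hΛF : planeSet Λ ⊆ hyp F) {a : Fin (n + 1) → KK} (ha : a ∈ Λ) (ha0 : a ≠ 0) :
    projDim (projZeros {F, tangentForm F a}) + 2 ≤ n := by
  have hgrad : Finsupp.equivFunOnFinite.symm (fun i => eval a (pderiv i F)) ≠ 0 := fun h =>
    ha0 (hns a fun i => DFunLike.congr_fun h i)
  refine projDim_projZeros_pair_add_two_le hF (isHomogeneous_sumSMulX _) (prime_sumSMulX hgrad)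
    fun hdvd => ?_
  obtain ⟨z, hz, hsing⟩ := exists_ne_zero_forall_eval_pderiv_eq_zero hF hd hgrad hdvd hΛ
    fun z => eval_tangentForm_eq_zero_of_mem hF (by omega) hΛF ha
  exact hz (hns z hsing)

end Hypersurface

theorem statement12_general (d n : ℕ) (hd : 2 ≤ d)
    (F : MvPolynomial (Fin (n + 1)) KK) (hF : F.IsHomogeneous d) (hns : NonsingularK F)
    (x : Pn n) (Z : Set (Submodule KK (Fin (n + 1) → KK)))
    (hZ : ∀ Λ ∈ Z, 2 ≤ Module.finrank KK Λ ∧ planeSet Λ ⊆ hyp F) :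
    projDim {y : Pn n | ∃ Λ ∈ Z, x.rep ∈ Λ ∧ y.rep ∈ Λ} + 2 ≤ n := by
  rcases Set.eq_empty_or_nonempty {y : Pn n | ∃ Λ ∈ Z, x.rep ∈ Λ ∧ y.rep ∈ Λ} with hC | hC
  · rw [hC, projDim_empty, WithBot.bot_add]
    exact bot_le
  · obtain ⟨-, Λ₀, hΛ₀, hx₀, -⟩ := hC
    have hcone : {y : Pn n | ∃ Λ ∈ Z, x.rep ∈ Λ ∧ y.rep ∈ Λ} ⊆
        projZeros {F, tangentForm F x.rep} := by
      rintro y ⟨Λ, hΛ, hx, hy⟩ f (rfl | rfl)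
      · exact (hZ Λ hΛ).2 hy
      · exact eval_tangentForm_eq_zero_of_mem hF (by omega) (hZ Λ hΛ).2 hx hy
    exact (add_le_add_left (projDim_mono hcone) 2).trans <|
      projDim_tangent_section_add_two_le hF hd hns (hZ Λ₀ hΛ₀).1 (hZ Λ₀ hΛ₀).2 hx₀ x.rep_nonzero

/-- **Inequality (8) in §3.** Let X ⊂ Pⁿ be a non-singular hypersurface of degree
d ≥ 2.  Then for every m ≥ 1, every point x ∈ X and every subvariety Z ⊆ F_m(X),
the cone C_x(Z) of m-planes of Z through x satisfies dim C_x(Z) ≤ n - 2.  (A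
hypersurface of degree at least 2 which is a cone is singular at its vertex.) -/
theorem statement12 (d n m : ℕ) (hd : 2 ≤ d) (hm : 1 ≤ m)
    (F : MvPolynomial (Fin (n + 1)) KK) (hF : F.IsHomogeneous d)
    (hns : NonsingularK F)
    (x : Pn n) (hx : x ∈ hyp F)
    (Z : Set (Submodule KK (Fin (n + 1) → KK)))
    (hZc : GrClosed m n Z) (hZ : Z ⊆ Fano m n (hyp F)) :
    projDim {y : Pn n | ∃ Λ ∈ Z, x.rep ∈ Λ ∧ y.rep ∈ Λ} +
        ((2 : ENat) : WithBot ENat) ≤ ((n : ENat) : WithBot ENat) := by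
  exact statement12_general d n hd F hF hns x Z fun Λ hΛ =>
    ⟨by have := (hZ hΛ).1; omega, (hZ hΛ).2⟩

end
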